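/- Let φ : ℂ → ℂ be analytic on the open disk {t : |t − 1| < R} for some R > 1, and let a, b be complex numbers such that b is not a nonpositive integer or zero. Suppose the double series Σ_{k≥0} Σ_{n≥k} [(a)_k / ((b)_k k!)] · [(−1)^n (−n)_k / n!] · φ^{(n)}(1) is absolutely summable (so the order of summation may be interchanged). Then Σ_{k=0}^∞ (a)_k φ^{(k)}(0) / ((b)_k k!) = Σ_{k=0}^∞ (−1)^k (b−a)_k φ^{(k)}(1) / ((b)_k k!). -/

import Mathlib

/-- The Pochhammer symbol `(a)_k = a (a+1) ⋯ (a+k-1)`. -/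
noncomputable def poch (a : ℂ) (k : ℕ) : ℂ := Polynomial.eval a (ascPochhammer ℂ k)

theorem poch_succ_r (a : ℂ) (k : ℕ) : poch a (k+1) = poch a k * (a + k) := by
  unfold poch
  exact ascPochhammer_succ_eval k a

theorem poch_succ_l (a : ℂ) (k : ℕ) : poch a (k+1) = a * poch (a+1) k := by
  unfold poch
  rw [ascPochhammer_succ_left]
  simp [Polynomial.eval_comp]

theorem poch_zero_r (a : ℂ) : poch a 0 = 1 := by simp [poch]

theorem poch_ne (b : ℂ) (hb : ∀ n : ℕ, b ≠ -(n : ℂ)) (k : ℕ) : poch b k ≠ 0 := by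
  induction k with
  | zero => simp [poch]
  | succ k ih =>
    rw [poch_succ_r]
    exact mul_ne_zero ih (fun h => hb k (eq_neg_of_add_eq_zero_left h))

theorem poch_neg (k m : ℕ) :
    poch (-((k + m : ℕ) : ℂ)) k * (Nat.factorial m : ℂ)
      = (-1) ^ k * (Nat.factorial (k + m) : ℂ) := by
  induction k generalizing m with
  | zero => simp [poch]
  | succ k ih =>
    have h := ih m
    rw [poch_succ_l]
    have e : -((k + 1 + m : ℕ) : ℂ) + 1 = -((k + m : ℕ) : ℂ) := by push_cast; ring
    rw [e, mul_assoc, h, show k + 1 + m = (k + m) + 1 by omega, Nat.factorial_succ]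
    push_cast
    ring

theorem chu (n : ℕ) : ∀ (a b : ℂ) (_ : ∀ n : ℕ, b ≠ -(n : ℂ)),
    ∑ p ∈ Finset.HasAntidiagonal.antidiagonal n, (Nat.choose n p.1 : ℂ) * ((-1) ^ p.1 * poch a p.1 / poch b p.1)
      = poch (b - a) n / poch b n := by
  induction n with
  | zero => intro a b _; simp [poch]
  | succ n ih =>
    intro a b hb
    have hb1 : ∀ n : ℕ, b + 1 ≠ -(n : ℂ) := by
      intro n h
      apply hb (n + 1)
      push_cast
      linear_combination h
    have hb0 : b ≠ 0 := by simpa using hb 0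
    rw [Finset.sum_antidiagonal_choose_succ_mul
      (fun i _ => (-1) ^ i * poch a i / poch b i) n, ih a b hb]
    have h2 : ∑ p ∈ Finset.HasAntidiagonal.antidiagonal n,
        (Nat.choose n p.2 : ℂ) * ((-1) ^ (p.1 + 1) * poch a (p.1 + 1) / poch b (p.1 + 1))
        = -(a / b) * (poch ((b + 1) - (a + 1)) n / poch (b + 1) n) := by
      rw [← ih (a + 1) (b + 1) hb1, Finset.mul_sum]
      apply Finset.sum_congr rfl
      intro p hp
      rw [Finset.HasAntidiagonal.mem_antidiagonal] at hp
      have hc : Nat.choose n p.2 = Nat.choose n p.1 := (Nat.choose_symm_of_eq_add (by omega))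
      rw [hc, poch_succ_l, poch_succ_l]
      have := poch_ne _ hb1 p.1
      field_simp
      ring
    rw [h2, show b + 1 - (a + 1) = b - a by ring]
    have n1 := poch_ne _ hb1 n
    have n2 := poch_ne _ hb n
    have n3 : b + n ≠ 0 := fun h => hb n (eq_neg_of_add_eq_zero_left h)
    have e : b * poch (b + 1) n = poch b n * (b + n) := by
      rw [← poch_succ_l, poch_succ_r]
    have e' : a / b * (poch (b - a) n / poch (b + 1) n)
        = a * poch (b - a) n / (poch b n * (b + n)) := by
      rw [← e]; field_simp
    rw [neg_mul, e', poch_succ_r, poch_succ_r]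
    field_simp
    ring

theorem taylor0 (φ : ℂ → ℂ) (R : ℝ) (hR : 1 < R)
    (hφ : AnalyticOnNhd ℂ φ (Metric.ball (1 : ℂ) R)) (k : ℕ) :
    ∑' m : ℕ, (-1 : ℂ) ^ m / (Nat.factorial m : ℂ) * iteratedDeriv (k + m) φ 1
      = iteratedDeriv k φ 0 := by
  have hk : DifferentiableOn ℂ (iteratedDeriv k φ) (Metric.ball (1 : ℂ) R) := by
    rw [iteratedDeriv_eq_iterate]
    exact (hφ.iterated_deriv k).differentiableOn
  have h := Complex.hasSum_taylorSeries_on_ball (r := R) hk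
    (z := 0) (by simpa using hR)
  rw [← h.tsum_eq]
  apply tsum_congr
  intro m
  have : iteratedDeriv m (iteratedDeriv k φ) 1 = iteratedDeriv (k + m) φ 1 := by
    simp only [iteratedDeriv_eq_iterate]
    rw [add_comm, Function.iterate_add_apply]
  rw [this]
  simp only [zero_sub, smul_eq_mul]
  field_simp


/-- Ramanujan's Entry 20: if `φ` is analytic on a disk of radius `R > 1` about `1` and the
double series may be summed in either order, then
`Σ_{k≥0} (a)_k φ^{(k)}(0) / ((b)_k k!) = Σ_{k≥0} (-1)^k (b-a)_k φ^{(k)}(1) / ((b)_k k!)`. -/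
theorem ramanujan_entry20
    (φ : ℂ → ℂ) (R : ℝ) (hR : 1 < R)
    (hφ : AnalyticOnNhd ℂ φ (Metric.ball (1 : ℂ) R))
    (a b : ℂ)
    (hb : ∀ n : ℕ, b ≠ -(n : ℂ))
    (hsum : Summable (fun p : ℕ × ℕ =>
      ‖(poch a p.1 / (poch b p.1 * (Nat.factorial p.1 : ℂ))) *
        ((-1 : ℂ) ^ (p.1 + p.2) * poch (-(((p.1 + p.2 : ℕ)) : ℂ)) p.1 /
          (Nat.factorial (p.1 + p.2) : ℂ)) * iteratedDeriv (p.1 + p.2) φ 1‖)) :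
    ∑' k : ℕ, poch a k * iteratedDeriv k φ 0 / (poch b k * (Nat.factorial k : ℂ))
      = ∑' k : ℕ, (-1 : ℂ) ^ k * poch (b - a) k * iteratedDeriv k φ 1 /
          (poch b k * (Nat.factorial k : ℂ)) := by
  set F : ℕ × ℕ → ℂ := fun p => (poch a p.1 / (poch b p.1 * (Nat.factorial p.1 : ℂ))) *
        ((-1 : ℂ) ^ p.2 / (Nat.factorial p.2 : ℂ) * iteratedDeriv (p.1 + p.2) φ 1) with hF
  have hFs : Summable F := by
    refine (hsum.of_norm).congr ?_
    intro p
    simp only [hF]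
    have h := poch_neg p.1 p.2
    have f1 : (Nat.factorial p.2 : ℂ) ≠ 0 := by exact_mod_cast Nat.factorial_ne_zero _
    have f2 : (Nat.factorial (p.1 + p.2) : ℂ) ≠ 0 := by exact_mod_cast Nat.factorial_ne_zero _
    have e : (-1 : ℂ) ^ (p.1 + p.2) * poch (-(((p.1 + p.2 : ℕ)) : ℂ)) p.1 /
          (Nat.factorial (p.1 + p.2) : ℂ) = (-1 : ℂ) ^ p.2 / (Nat.factorial p.2 : ℂ) := by
      rw [div_eq_div_iff f2 f1, mul_assoc, h, pow_add]
      have : ((-1 : ℂ) ^ p.1) * (-1) ^ p.1 = 1 := by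
        rw [← mul_pow]; simp
      linear_combination ((-1 : ℂ) ^ p.2 * (Nat.factorial (p.1 + p.2) : ℂ)) * this
    rw [e, mul_assoc]
  have hL : ∑' p, F p
      = ∑' k : ℕ, poch a k * iteratedDeriv k φ 0 / (poch b k * (Nat.factorial k : ℂ)) := by
    rw [hFs.tsum_prod]
    apply tsum_congr
    intro k
    simp only [hF]
    rw [tsum_mul_left, taylor0 φ R hR hφ k]
    ring
  have hRt : ∑' p, F p = ∑' k : ℕ, (-1 : ℂ) ^ k * poch (b - a) k * iteratedDeriv k φ 1 /
          (poch b k * (Nat.factorial k : ℂ)) := by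
    rw [← Finset.HasAntidiagonal.sigmaAntidiagonalEquivProd.tsum_eq F]
    have hs : Summable (fun x => F (Finset.HasAntidiagonal.sigmaAntidiagonalEquivProd x)) :=
      (Finset.HasAntidiagonal.sigmaAntidiagonalEquivProd.summable_iff (f := F)).2 hFs
    rw [hs.tsum_sigma]
    apply tsum_congr
    intro n
    rw [tsum_fintype]
    simp only [Finset.HasAntidiagonal.sigmaAntidiagonalEquivProd_apply]
    rw [Finset.sum_coe_sort (Finset.HasAntidiagonal.antidiagonal n) F]
    have : (-1 : ℂ) ^ n * poch (b - a) n * iteratedDeriv n φ 1 /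
          (poch b n * (Nat.factorial n : ℂ))
        = ((-1 : ℂ) ^ n * iteratedDeriv n φ 1 / (Nat.factorial n : ℂ))
          * (poch (b - a) n / poch b n) := by
      have := poch_ne b hb n
      field_simp
    rw [this, ← chu n a b hb, Finset.mul_sum]
    apply Finset.sum_congr rfl
    intro p hp
    rw [Finset.HasAntidiagonal.mem_antidiagonal] at hp
    subst hp
    simp only [hF]
    have f1 : (Nat.factorial p.2 : ℂ) ≠ 0 := by exact_mod_cast Nat.factorial_ne_zero _
    have f3 : (Nat.factorial p.1 : ℂ) ≠ 0 := by exact_mod_cast Nat.factorial_ne_zero _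
    have f2 : (Nat.factorial (p.1 + p.2) : ℂ) ≠ 0 := by exact_mod_cast Nat.factorial_ne_zero _
    have := poch_ne b hb p.1
    have hc : (Nat.choose (p.1 + p.2) p.1 : ℂ)
        = (Nat.factorial (p.1 + p.2) : ℂ) / (Nat.factorial p.1 * Nat.factorial p.2) := by
      exact Nat.cast_add_choose ℂ
    have h1 : ((-1 : ℂ) ^ p.1) * (-1) ^ p.1 = 1 := by
      rw [← mul_pow]; simp
    rw [hc, pow_add]
    field_simp
    linear_combination (-(poch a p.1 * iteratedDeriv (p.1 + p.2) φ 1)) * h1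
  rw [← hL, hRt]
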